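/- arXiv:2311.16285 — 8 statements merged into one kernel-verified Lean document; each statement's English description precedes it below -/
import Mathlib

section
/- There exists a constant C > 0 such that for every L > 0, every β ∈ ℝ, and every strictly positive L-periodic function v ∈ C²(ℝ), one has ∫₀^L v(x)^β (v''(x))² dx ≥ C (1 − β)² ∫₀^L v(x)^{β−2} (v'(x))⁴ dx. -/
/-- Lemma 4.5 of the paper: there is a universal constant `C > 0` such that for every
period `L > 0`, every `β ∈ ℝ`, and every strictly positive `L`-periodic `v ∈ C²(ℝ)`,
`∫₀ᴸ v^β (v'')² ≥ C (1−β)² ∫₀ᴸ v^{β−2} (v')⁴`. -/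
theorem stmt_3 :
    ∃ C : ℝ, 0 < C ∧ ∀ (L : ℝ), 0 < L → ∀ (β : ℝ) (v : ℝ → ℝ),
      ContDiff ℝ 2 v → Function.Periodic v L → (∀ x, 0 < v x) →
      C * (1 - β) ^ 2 * ∫ x in (0:ℝ)..L, v x ^ (β - 2) * (deriv v x) ^ 4 ≤
        ∫ x in (0:ℝ)..L, v x ^ β * (deriv (deriv v) x) ^ 2 := by
  refine ⟨1 / 9, by norm_num, ?_⟩
  intro L hL β v hv hper hpos
  have hv0 : Continuous v := hv.continuous
  have hd : ContDiff ℝ 1 (deriv v) := by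
    have h2 : ContDiff ℝ (1 + 1) v := by
      convert hv using 1
      norm_num
    exact (contDiff_succ_iff_deriv.1 h2).2.2
  have hv1 : Continuous (deriv v) := hd.continuous
  have hv2 : Continuous (deriv (deriv v)) := hd.continuous_deriv le_rfl
  have hpow : ∀ p : ℝ, Continuous (fun x => v x ^ p) := fun p =>
    hv0.rpow_const (fun x => Or.inl (hpos x).ne')
  have hD : ∀ x, HasDerivAt v (deriv v x) x := fun x =>
    (hv.differentiable (by norm_num) x).hasDerivAt
  have hD2 : ∀ x, HasDerivAt (deriv v) (deriv (deriv v) x) x := fun x =>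
    (hd.differentiable (by norm_num) x).hasDerivAt
  have hperd : deriv v L = deriv v 0 := by
    have h1 : (fun x => v (x + L)) = v := funext hper
    have h2 := deriv_comp_add_const v L 0
    rw [h1, zero_add] at h2
    exact h2.symm
  have hper0 : v L = v 0 := by simpa using hper 0
  have hF : ∀ x, HasDerivAt (fun x => v x ^ (β - 1) * deriv v x ^ 3)
      ((β - 1) * (v x ^ (β - 2) * deriv v x ^ 4)
        + 3 * (v x ^ (β - 1) * deriv v x ^ 2 * deriv (deriv v) x)) x := by
    intro x
    have h := ((hD x).rpow_const (p := β - 1) (Or.inl (hpos x).ne')).mul ((hD2 x).pow 3)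
    refine HasDerivAt.congr_deriv (f := fun x => v x ^ (β - 1) * deriv v x ^ 3) h ?_
    rw [show β - 1 - 1 = β - 2 by ring]
    push_cast
    simp only [Pi.pow_apply]
    ring
  have hcI : Continuous (fun x => v x ^ (β - 2) * deriv v x ^ 4) :=
    (hpow (β - 2)).mul (hv1.pow 4)
  have hcJ : Continuous (fun x => v x ^ β * deriv (deriv v) x ^ 2) :=
    (hpow β).mul (hv2.pow 2)
  have hcK : Continuous (fun x => v x ^ (β - 1) * deriv v x ^ 2 * deriv (deriv v) x) :=
    ((hpow (β - 1)).mul (hv1.pow 2)).mul hv2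
  have hcF : Continuous (fun x => (β - 1) * (v x ^ (β - 2) * deriv v x ^ 4)
        + 3 * (v x ^ (β - 1) * deriv v x ^ 2 * deriv (deriv v) x)) :=
    (hcI.const_mul (β - 1)).add (hcK.const_mul 3)
  have hcS : Continuous (fun x => v x ^ β * (deriv (deriv v) x) ^ 2
      + (2 * (β - 1) / 9) * ((β - 1) * (v x ^ (β - 2) * deriv v x ^ 4)
        + 3 * (v x ^ (β - 1) * deriv v x ^ 2 * deriv (deriv v) x))) :=
    hcJ.add (hcF.const_mul _)
  have hint := intervalIntegral.integral_eq_sub_of_hasDerivAt (a := 0) (b := L)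
    (fun x _ => hF x) (hcF.intervalIntegrable 0 L)
  rw [hper0, hperd, sub_self] at hint
  have key : 0 ≤ ∫ x in (0:ℝ)..L, ((v x ^ β * (deriv (deriv v) x) ^ 2
      + (2 * (β - 1) / 9) * ((β - 1) * (v x ^ (β - 2) * deriv v x ^ 4)
        + 3 * (v x ^ (β - 1) * deriv v x ^ 2 * deriv (deriv v) x)))
      - (1 / 9 * (1 - β) ^ 2) * (v x ^ (β - 2) * deriv v x ^ 4)) := by
    apply intervalIntegral.integral_nonneg hL.le
    intro x _
    have e1 : v x ^ β = v x ^ (β - 2) * v x ^ 2 := by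
      rw [← Real.rpow_natCast, ← Real.rpow_add (hpos x)]
      norm_num
    have e2 : v x ^ (β - 1) = v x ^ (β - 2) * v x := by
      rw [← Real.rpow_add_one (hpos x).ne']
      ring_nf
    rw [e1, e2]
    have h := mul_nonneg (Real.rpow_nonneg (hpos x).le (β - 2))
      (sq_nonneg (v x * deriv (deriv v) x + (β - 1) / 3 * deriv v x ^ 2))
    refine h.trans_eq ?_
    ring
  rw [intervalIntegral.integral_sub
      (hcS.intervalIntegrable 0 L)
      ((hcI.const_mul _).intervalIntegrable 0 L),
    intervalIntegral.integral_add (hcJ.intervalIntegrable 0 L)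
      ((hcF.const_mul _).intervalIntegrable 0 L),
    intervalIntegral.integral_const_mul, intervalIntegral.integral_const_mul, hint] at key
  linarith
end

section
/- For every L > 0 there exists a constant C > 0 (depending only on L) such that for every nonnegative L-periodic function v ∈ C²(ℝ) one has ∫₀^L v(x)² (v''(x))² dx ≥ C (∫₀^L v(x) dx)² ∫₀^L (v'(x))² dx. -/
theorem cs_aux (L : ℝ) (hL : 0 < L) (f : ℝ → ℝ) (hf : Continuous f) :
    (∫ x in (0:ℝ)..L, f x) ^ 2 ≤ L * ∫ x in (0:ℝ)..L, (f x) ^ 2 := by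
  set I := ∫ x in (0:ℝ)..L, f x with hI
  have h0 : 0 ≤ ∫ x in (0:ℝ)..L, (L * f x - I) ^ 2 :=
    intervalIntegral.integral_nonneg hL.le (fun x _ => sq_nonneg _)
  have h1 : ∫ x in (0:ℝ)..L, (L * f x - I) ^ 2
      = L ^ 2 * (∫ x in (0:ℝ)..L, (f x) ^ 2) - 2 * L * I * I + L * I ^ 2 := by
    have : ∀ x, (L * f x - I) ^ 2 = L ^ 2 * (f x) ^ 2 - 2 * L * I * f x + I ^ 2 := by
      intro x; ring
    simp_rw [this]
    rw [intervalIntegral.integral_add, intervalIntegral.integral_sub,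
      intervalIntegral.integral_const_mul, intervalIntegral.integral_const_mul, ← hI]
    · simp
    all_goals exact Continuous.intervalIntegrable (by fun_prop) _ _
  rw [h1] at h0
  have h2 : 0 ≤ L * (L * (∫ x in (0:ℝ)..L, (f x) ^ 2) - I ^ 2) := by nlinarith
  have := nonneg_of_mul_nonneg_right h2 hL
  linarith

theorem osc_aux (L : ℝ) (f : ℝ → ℝ) (hf : ContDiff ℝ 1 f) (x y : ℝ)
    (hx : x ∈ Set.Icc 0 L) (hy : y ∈ Set.Icc 0 L) :
    |f x - f y| ≤ ∫ z in (0:ℝ)..L, |deriv f z| := by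
  have hc : Continuous (deriv f) := hf.continuous_deriv le_rfl
  wlog h : y ≤ x generalizing x y
  · rw [abs_sub_comm]; exact this y x hy hx (le_of_not_ge h)
  rw [← intervalIntegral.integral_deriv_eq_sub (fun z _ => (hf.differentiable (by norm_num)) z)
    (hc.intervalIntegrable _ _)]
  refine (intervalIntegral.abs_integral_le_integral_abs h).trans ?_
  exact intervalIntegral.integral_mono_interval hy.1 h hx.2
    (Filter.Eventually.of_forall fun z => abs_nonneg _) (hc.abs.intervalIntegrable _ _)

theorem stmt_4 (L : ℝ) (hL : 0 < L) :
    ∃ C : ℝ, 0 < C ∧ ∀ v : ℝ → ℝ,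
      ContDiff ℝ 2 v → Function.Periodic v L → (∀ x, 0 ≤ v x) →
      C * (∫ x in (0:ℝ)..L, v x) ^ 2 * ∫ x in (0:ℝ)..L, (deriv v x) ^ 2 ≤
        ∫ x in (0:ℝ)..L, (v x) ^ 2 * (deriv (deriv v) x) ^ 2 := by
  refine ⟨1 / (4 * L ^ 4), by positivity, ?_⟩
  intro v hv hper hpos
  have hv1 : ContDiff ℝ 1 v := hv.of_le (by norm_num)
  have hd : ContDiff ℝ 1 (deriv v) := by
    have : ContDiff ℝ (1 + 1) v := by simpa [one_add_one_eq_two] using hv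
    exact (contDiff_succ_iff_deriv.1 this).2.2
  have c0 : Continuous v := hv.continuous
  have c1 : Continuous (deriv v) := hd.continuous
  have c2 : Continuous (deriv (deriv v)) := hd.continuous_deriv le_rfl
  have dv : Differentiable ℝ v := hv1.differentiable (by norm_num)
  have ddv : Differentiable ℝ (deriv v) := hd.differentiable (by norm_num)
  have hper0 : v L = v 0 := by simpa using hper 0
  have hper1 : deriv v L = deriv v 0 := by
    have h : (fun x => v (x + L)) = v := funext hper
    have := deriv_comp_add_const v L 0
    rw [h] at this
    simpa using this.symm
  set m := ∫ x in (0:ℝ)..L, v x with hm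
  set A := ∫ x in (0:ℝ)..L, (deriv v x) ^ 2 with hA
  set D := ∫ x in (0:ℝ)..L, (v x) ^ 2 * (deriv (deriv v) x) ^ 2 with hD
  set B := ∫ x in (0:ℝ)..L, (deriv (deriv v) x) ^ 2 with hB
  set s := ∫ x in (0:ℝ)..L, |deriv v x| with hs
  set t := ∫ x in (0:ℝ)..L, |deriv (deriv v) x| with ht
  have hm0 : 0 ≤ m := intervalIntegral.integral_nonneg hL.le (fun x _ => hpos x)
  have hA0 : 0 ≤ A := intervalIntegral.integral_nonneg hL.le (fun x _ => sq_nonneg _)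
  have hsA : s ^ 2 ≤ L * A := by
    simpa [sq_abs] using cs_aux L hL (fun x => |deriv v x|) c1.abs
  have htB : t ^ 2 ≤ L * B := by
    simpa [sq_abs] using cs_aux L hL (fun x => |deriv (deriv v) x|) c2.abs
  have hAD : A ^ 2 ≤ L * D := by
    have h := cs_aux L hL (fun x => v x * deriv (deriv v) x) (c0.mul c2)
    have e : ∫ x in (0:ℝ)..L, v x * deriv (deriv v) x = - A := by
      rw [intervalIntegral.integral_mul_deriv_eq_deriv_mul
        (fun x _ => (dv x).hasDerivAt) (fun x _ => (ddv x).hasDerivAt)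
        (c1.intervalIntegrable _ _) (c2.intervalIntegrable _ _), hper0, hper1, hA]
      simp [sq]
    simp only [mul_pow] at h
    rw [e] at h
    simpa using h
  have hAB : A ≤ L ^ 2 * B := by
    obtain ⟨c, hc, hc0⟩ := exists_deriv_eq_zero hL c0.continuousOn hper0.symm
    have h1 : A ≤ ∫ x in (0:ℝ)..L, t ^ 2 := by
      refine intervalIntegral.integral_mono_on hL.le
        ((c1.pow 2).intervalIntegrable _ _) (by simp) ?_
      intro x hx
      have := osc_aux L (deriv v) hd x c hx ⟨hc.1.le, hc.2.le⟩
      rw [hc0, sub_zero] at this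
      rw [← sq_abs]
      exact pow_le_pow_left₀ (abs_nonneg _) this 2
    simp only [intervalIntegral.integral_const, sub_zero, smul_eq_mul] at h1
    nlinarith
  have key : m ^ 2 * A ≤ 4 * L ^ 4 * D := by
    by_cases hcase : m ≤ 2 * L * s
    · have h1 : m ^ 2 ≤ 4 * L ^ 3 * A := by
        have : m ^ 2 ≤ (2 * L * s) ^ 2 := pow_le_pow_left₀ hm0 hcase 2
        have h3 : 4 * L ^ 2 * s ^ 2 ≤ 4 * L ^ 2 * (L * A) := by gcongr
        nlinarith
      calc m ^ 2 * A ≤ 4 * L ^ 3 * A * A := by gcongr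
        _ = 4 * L ^ 3 * A ^ 2 := by ring
        _ ≤ 4 * L ^ 3 * (L * D) := by gcongr
        _ = _ := by ring
    · push Not at hcase
      have hlow : ∀ x ∈ Set.Icc 0 L, m ≤ 2 * L * v x := by
        intro x hx
        have h1 : m ≤ ∫ y in (0:ℝ)..L, (v x + s) := by
          refine intervalIntegral.integral_mono_on hL.le
            (c0.intervalIntegrable _ _) (by simp) ?_
          intro y hy
          have := (abs_le.1 (osc_aux L v hv1 x y hx hy)).1
          linarith
        simp only [intervalIntegral.integral_const, sub_zero, smul_eq_mul] at h1
        nlinarith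
      have h2 : m ^ 2 * B ≤ 4 * L ^ 2 * D := by
        rw [hB, hD, ← intervalIntegral.integral_const_mul, ← intervalIntegral.integral_const_mul]
        refine intervalIntegral.integral_mono_on hL.le
          (Continuous.intervalIntegrable (by fun_prop) _ _)
          (Continuous.intervalIntegrable (by fun_prop) _ _) ?_
        intro x hx
        have : m ^ 2 ≤ (2 * L * v x) ^ 2 := pow_le_pow_left₀ hm0 (hlow x hx) 2
        calc _ ≤ (2 * L * v x) ^ 2 * deriv (deriv v) x ^ 2 := by gcongr
          _ = _ := by ring
      calc m ^ 2 * A ≤ m ^ 2 * (L ^ 2 * B) := by gcongr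
        _ = L ^ 2 * (m ^ 2 * B) := by ring
        _ ≤ L ^ 2 * (4 * L ^ 2 * D) := by gcongr
        _ = _ := by ring
  rw [mul_assoc, div_mul_eq_mul_div, one_mul, div_le_iff₀ (by positivity)]
  linarith
end

section
/- Let L > 0, ε > 0, and let u ∈ C³(ℝ) be L-periodic and strictly positive. Set I := ∫₀^L f_ε(u)(u''')² dx and J := (1/2)∫₀^L (u')² dx. Then √(2 I J) ≥ −∫₀^L √(f_ε(u)) u' u''' dx ≥ ∫₀^L √(f_ε(u)) (u'')² dx − (2/3) ε² ∫₀^L (ε + u²)^{−5/2} (u')⁴ dx. -/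
theorem aux_cs (L : ℝ) (hL : 0 < L) (a b : ℝ → ℝ) (ha : Continuous a) (hb : Continuous b) :
    (∫ x in (0:ℝ)..L, a x * b x) ^ 2 ≤
      (∫ x in (0:ℝ)..L, a x ^ 2) * (∫ x in (0:ℝ)..L, b x ^ 2) := by
  have key : ∀ t : ℝ, 0 ≤ (∫ x in (0:ℝ)..L, a x ^ 2) * (t * t) +
      (2 * ∫ x in (0:ℝ)..L, a x * b x) * t + (∫ x in (0:ℝ)..L, b x ^ 2) := by
    intro t
    have h1 : 0 ≤ ∫ x in (0:ℝ)..L, (t * a x + b x) ^ 2 :=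
      intervalIntegral.integral_nonneg hL.le (fun x _ => sq_nonneg _)
    have h2 : (∫ x in (0:ℝ)..L, (t * a x + b x) ^ 2) =
        ∫ x in (0:ℝ)..L, ((t * t) * a x ^ 2 + (2 * t) * (a x * b x) + b x ^ 2) := by
      congr 1; ext x; ring
    rw [h2, intervalIntegral.integral_add, intervalIntegral.integral_add,
      intervalIntegral.integral_const_mul, intervalIntegral.integral_const_mul] at h1
    · linarith
    all_goals exact Continuous.intervalIntegrable (by fun_prop) _ _
  have := discrim_le_zero key
  unfold discrim at this
  nlinarith

/-- Key estimate for the exponential energy decay (Section 7): for strictly positive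
`L`-periodic `u ∈ C³(ℝ)`, with `I = ∫₀ᴸ f_ε(u)(u''')²` and `J = (1/2)∫₀ᴸ (u')²`,
`√(2IJ) ≥ −∫₀ᴸ √(f_ε(u)) u' u''' ≥ ∫₀ᴸ √(f_ε(u)) (u'')² − (2/3)ε² ∫₀ᴸ (ε+u²)^{−5/2}(u')⁴`. -/
theorem stmt_6 (L ε : ℝ) (hL : 0 < L) (hε : 0 < ε) (u : ℝ → ℝ)
    (hu : ContDiff ℝ 3 u) (hup : Function.Periodic u L) (hpos : ∀ x, 0 < u x) :
    Real.sqrt (2 * (∫ x in (0:ℝ)..L, (u x ^ 4 / (ε + u x ^ 2)) * (deriv^[3] u x) ^ 2) *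
        ((1 / 2) * ∫ x in (0:ℝ)..L, (deriv u x) ^ 2)) ≥
      (-∫ x in (0:ℝ)..L, Real.sqrt (u x ^ 4 / (ε + u x ^ 2)) * deriv u x * deriv^[3] u x) ∧
    (-∫ x in (0:ℝ)..L, Real.sqrt (u x ^ 4 / (ε + u x ^ 2)) * deriv u x * deriv^[3] u x) ≥
      (∫ x in (0:ℝ)..L, Real.sqrt (u x ^ 4 / (ε + u x ^ 2)) * (deriv^[2] u x) ^ 2) -
        (2 / 3) * ε ^ 2 *
          ∫ x in (0:ℝ)..L, (ε + u x ^ 2) ^ (-(5 : ℝ) / 2) * (deriv u x) ^ 4 := by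
  have hu0 : Differentiable ℝ u := hu.differentiable (by norm_num)
  have hu1 : ContDiff ℝ 2 (deriv u) := by
    have : ContDiff ℝ (2 + 1) u := by norm_num; exact hu
    exact (contDiff_succ_iff_deriv.1 this).2.2
  have hu2 : ContDiff ℝ 1 (deriv (deriv u)) := by
    have : ContDiff ℝ (1 + 1) (deriv u) := by norm_num; exact hu1
    exact (contDiff_succ_iff_deriv.1 this).2.2
  have hc3 : Continuous (deriv (deriv (deriv u))) := hu2.continuous_deriv le_rfl
  have e2 : deriv^[2] u = deriv (deriv u) := rfl
  have e3 : deriv^[3] u = deriv (deriv (deriv u)) := rfl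
  rw [e2, e3]
  have hper : ∀ v : ℝ → ℝ, Function.Periodic v L → Function.Periodic (deriv v) L := by
    intro v hv x
    have h : (fun y => v (y + L)) = v := funext hv
    rw [← deriv_comp_add_const, h]
  have hp1 := hper _ hup
  have hp2 := hper _ hp1
  have d0 : ∀ x, HasDerivAt u (deriv u x) x := fun x => (hu0 x).hasDerivAt
  have d1 : ∀ x, HasDerivAt (deriv u) (deriv (deriv u) x) x :=
    fun x => ((hu1.differentiable (by norm_num)) x).hasDerivAt
  have d2 : ∀ x, HasDerivAt (deriv (deriv u)) (deriv (deriv (deriv u)) x) x :=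
    fun x => ((hu2.differentiable (by norm_num)) x).hasDerivAt
  have c0 : Continuous u := hu.continuous
  have c1 : Continuous (deriv u) := hu1.continuous
  have c2 : Continuous (deriv (deriv u)) := hu2.continuous
  generalize deriv (deriv (deriv u)) = u3 at *
  generalize deriv (deriv u) = u2 at *
  generalize deriv u = u1 at *
  have hw : ∀ x, 0 < ε + u x ^ 2 := fun x => by positivity
  obtain ⟨r, hr⟩ : ∃ r : ℝ → ℝ, r = fun x => Real.sqrt (ε + u x ^ 2) := ⟨_, rfl⟩
  have hrpos : ∀ x, 0 < r x := fun x => by rw [hr]; exact Real.sqrt_pos.2 (hw x)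
  have hrne : ∀ x, r x ≠ 0 := fun x => (hrpos x).ne'
  have hrsq : ∀ x, r x ^ 2 = ε + u x ^ 2 := fun x => by rw [hr]; exact Real.sq_sqrt (hw x).le
  have cr : Continuous r := by rw [hr]; fun_prop
  have hsq : ∀ x, Real.sqrt (u x ^ 4 / (ε + u x ^ 2)) = u x ^ 2 / r x := by
    intro x
    have : u x ^ 4 / (ε + u x ^ 2) = (u x ^ 2 / r x) ^ 2 := by
      rw [← hrsq x, div_pow]; ring
    rw [this]
    exact Real.sqrt_sq (div_nonneg (sq_nonneg _) (hrpos x).le)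
  have hrp : ∀ x, (ε + u x ^ 2) ^ (-(5 : ℝ) / 2) = 1 / r x ^ 5 := by
    intro x
    rw [← hrsq x, ← Real.rpow_natCast (r x) 2, ← Real.rpow_mul (hrpos x).le,
      ← Real.rpow_natCast (r x) 5, one_div, ← Real.rpow_neg (hrpos x).le]
    norm_num
  have dr : ∀ x, HasDerivAt r (u x * u1 x / r x) x := by
    intro x
    have h := (((d0 x).pow 2).const_add ε).sqrt (hw x).ne'
    rw [hr]
    refine h.congr_deriv ?_
    show _ = u x * u1 x / √(ε + u x ^ 2)
    simp only [Pi.pow_apply]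
    have := (Real.sqrt_pos.2 (hw x)).ne'
    field_simp
    norm_num
    ring
  have hf : ∀ x, u x ^ 4 / (ε + u x ^ 2) * u3 x ^ 2 = (u x ^ 2 / r x * u3 x) ^ 2 := by
    intro x
    rw [← hrsq x, mul_pow, div_pow]; ring
  simp only [hsq, hrp, hf]
  have cg : Continuous (fun x => u x ^ 2 / r x) := (c0.pow 2).div cr hrne
  have c5 : Continuous (fun x => 1 / r x ^ 5) :=
    continuous_const.div (cr.pow 5) (fun x => pow_ne_zero _ (hrne x))
  constructor
  · have h := aux_cs L hL (fun x => u x ^ 2 / r x * u3 x) u1 (cg.mul hc3) c1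
    have e : (∫ x in (0:ℝ)..L, u x ^ 2 / r x * u1 x * u3 x) =
        ∫ x in (0:ℝ)..L, (u x ^ 2 / r x * u3 x) * u1 x := by
      congr 1; ext x; ring
    rw [e]
    apply Real.le_sqrt_of_sq_le
    rw [neg_sq]
    refine h.trans (le_of_eq ?_)
    ring
  · have dH : ∀ x, HasDerivAt (fun x => u x ^ 2 / r x * u1 x * u2 x
        - (u x / r x + ε * u x / r x ^ 3) * u1 x ^ 3 / 3)
        (u x ^ 2 / r x * u2 x ^ 2 + u x ^ 2 / r x * u1 x * u3 x
          - ε * (2 * ε - u x ^ 2) / 3 * (1 / r x ^ 5 * u1 x ^ 4)) x := by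
      intro x
      have h := (((((d0 x).pow 2).div (dr x) (hrne x)).mul (d1 x)).mul (d2 x)).sub
        (((((d0 x).div (dr x) (hrne x)).add (((d0 x).const_mul ε).div ((dr x).pow 3)
          (pow_ne_zero 3 (hrne x)))).mul ((d1 x).pow 3)).div_const 3)
      refine h.congr_deriv ?_
      simp only [Pi.pow_apply, Pi.div_apply, Pi.mul_apply, Pi.add_apply]
      have hε' : ε = r x ^ 2 - u x ^ 2 := by linarith [hrsq x]
      rw [hε']
      have := hrne x
      field_simp
      ring
    have cd : Continuous (fun x => u x ^ 2 / r x * u2 x ^ 2 + u x ^ 2 / r x * u1 x * u3 x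
          - ε * (2 * ε - u x ^ 2) / 3 * (1 / r x ^ 5 * u1 x ^ 4)) := by fun_prop
    have hI := intervalIntegral.integral_eq_sub_of_hasDerivAt (a := 0) (b := L)
      (fun x _ => dH x) (cd.intervalIntegrable _ _)
    have q0 : u L = u 0 := by simpa using hup 0
    have q1 : u1 L = u1 0 := by simpa using hp1 0
    have q2 : u2 L = u2 0 := by simpa using hp2 0
    have qr : r L = r 0 := by rw [hr]; simp only [q0]
    rw [q0, q1, q2, qr, sub_self] at hI
    have i1 : IntervalIntegrable (fun x => u x ^ 2 / r x * u2 x ^ 2) MeasureTheory.volume 0 L :=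
      Continuous.intervalIntegrable (by fun_prop) _ _
    have i2 : IntervalIntegrable (fun x => u x ^ 2 / r x * u1 x * u3 x)
      MeasureTheory.volume 0 L := Continuous.intervalIntegrable (by fun_prop) _ _
    have i3 : IntervalIntegrable (fun x => 2 / 3 * ε ^ 2 * (1 / r x ^ 5 * u1 x ^ 4))
      MeasureTheory.volume 0 L := Continuous.intervalIntegrable (by fun_prop) _ _
    have hm : (∫ x in (0:ℝ)..L, (u x ^ 2 / r x * u2 x ^ 2 + u x ^ 2 / r x * u1 x * u3 x
          - 2 / 3 * ε ^ 2 * (1 / r x ^ 5 * u1 x ^ 4))) ≤ 0 := by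
      refine le_trans ?_ hI.le
      refine intervalIntegral.integral_mono_on hL.le ((i1.add i2).sub i3)
        (cd.intervalIntegrable _ _) (fun x _ => ?_)
      have hn : 0 ≤ 1 / r x ^ 5 * u1 x ^ 4 := by
        have := hrpos x
        positivity
      have : 0 ≤ ε * u x ^ 2 / 3 * (1 / r x ^ 5 * u1 x ^ 4) := by
        have := hpos x
        positivity
      nlinarith
    rw [intervalIntegral.integral_sub (i1.add i2) i3, intervalIntegral.integral_add i1 i2,
      intervalIntegral.integral_const_mul] at hm
    linarith
end

section
/- For all L > 0, C > 0, δ > 0, and every x₀ ∈ [0, L], one has ∫₀^L (δ + C|x − x₀|^{1/2})^{−2} dx ≥ (1/(2C²)) · ln(1 + C²L/(2δ²)). -/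
lemma aux_cont (C δ : ℝ) (hC : 0 < C) (hδ : 0 < δ) :
    Continuous fun x : ℝ => ((δ + C * Real.sqrt |x|) ^ 2)⁻¹ := by
  apply Continuous.inv₀ (by fun_prop)
  intro x
  positivity

lemma aux_half (a C δ : ℝ) (ha : 0 ≤ a) (hC : 0 < C) (hδ : 0 < δ) :
    (1 / (2 * C ^ 2)) * Real.log (1 + C ^ 2 * a / δ ^ 2) ≤
      ∫ x in (0:ℝ)..a, ((δ + C * Real.sqrt |x|) ^ 2)⁻¹ := by
  have hpos : ∀ x ∈ Set.uIcc 0 a, 0 < 1 + C ^ 2 * x / δ ^ 2 := by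
    intro x hx
    rw [Set.uIcc_of_le ha] at hx
    have := hx.1
    positivity
  have hpos' : ∀ x ∈ Set.uIcc 0 a, 0 < 2 * (δ ^ 2 + C ^ 2 * x) := by
    intro x hx
    rw [Set.uIcc_of_le ha] at hx
    have := hx.1
    positivity
  have hint : IntervalIntegrable (fun x : ℝ => (2 * (δ ^ 2 + C ^ 2 * x))⁻¹)
      MeasureTheory.volume 0 a := by
    apply ContinuousOn.intervalIntegrable
    apply ContinuousOn.inv₀ (by fun_prop)
    intro x hx
    exact (hpos' x hx).ne'
  have hF : ∫ x in (0:ℝ)..a, (2 * (δ ^ 2 + C ^ 2 * x))⁻¹ =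
      (1 / (2 * C ^ 2)) * Real.log (1 + C ^ 2 * a / δ ^ 2) := by
    rw [intervalIntegral.integral_eq_sub_of_hasDerivAt
      (f := fun x => (1 / (2 * C ^ 2)) * Real.log (1 + C ^ 2 * x / δ ^ 2)) _ hint]
    · simp
    · intro x hx
      have h1 : HasDerivAt (fun x : ℝ => 1 + C ^ 2 * x / δ ^ 2) (C ^ 2 * 1 / δ ^ 2) x :=
        (((hasDerivAt_id x).const_mul (C ^ 2)).div_const (δ ^ 2)).const_add 1
      have h2 := (h1.log (hpos x hx).ne').const_mul (1 / (2 * C ^ 2))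
      refine h2.congr_deriv ?_
      have := (hpos x hx).ne'
      have h3 : δ ^ 2 + C ^ 2 * x ≠ 0 := by
        have := hpos' x hx
        intro h
        rw [h] at this
        simp at this
      have h4 : 1 + C ^ 2 * x / δ ^ 2 = (δ ^ 2 + C ^ 2 * x) / δ ^ 2 := by
        field_simp
      rw [h4]
      field_simp
  rw [← hF]
  apply intervalIntegral.integral_mono_on ha hint ((aux_cont C δ hC hδ).intervalIntegrable _ _)
  intro x hx
  have hx0 := hx.1
  rw [abs_of_nonneg hx0]
  apply inv_anti₀ (by positivity)
  nlinarith [sq_nonneg (δ - C * Real.sqrt x), Real.sq_sqrt hx0]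

/-- Integral lower bound from Section 6: for all `L, C, δ > 0` and `x₀ ∈ [0,L]`,
`∫₀ᴸ (δ + C|x−x₀|^{1/2})^{−2} dx ≥ (1/(2C²)) ln(1 + C²L/(2δ²))`. -/
theorem stmt_8 (L C δ : ℝ) (hL : 0 < L) (hC : 0 < C) (hδ : 0 < δ)
    (x₀ : ℝ) (hx₀ : x₀ ∈ Set.Icc (0 : ℝ) L) :
    (1 / (2 * C ^ 2)) * Real.log (1 + C ^ 2 * L / (2 * δ ^ 2)) ≤
      ∫ x in (0:ℝ)..L, ((δ + C * Real.sqrt |x - x₀|) ^ 2)⁻¹ := by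
  obtain ⟨h0, h1⟩ := hx₀
  have h1' : 0 ≤ L - x₀ := by linarith
  have hc := aux_cont C δ hC hδ
  rw [intervalIntegral.integral_comp_sub_right
    (fun x : ℝ => ((δ + C * Real.sqrt |x|) ^ 2)⁻¹) x₀,
    ← intervalIntegral.integral_add_adjacent_intervals
      (hc.intervalIntegrable _ 0) (hc.intervalIntegrable 0 _)]
  have hneg : ∫ x in (0 - x₀)..0, ((δ + C * Real.sqrt |x|) ^ 2)⁻¹ =
      ∫ x in (0:ℝ)..x₀, ((δ + C * Real.sqrt |x|) ^ 2)⁻¹ := by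
    have := intervalIntegral.integral_comp_neg (a := 0) (b := x₀)
      (fun x : ℝ => ((δ + C * Real.sqrt |x|) ^ 2)⁻¹)
    simp only [abs_neg, neg_zero] at this
    rw [this, zero_sub]
  rw [hneg]
  refine le_trans ?_ (add_le_add (aux_half x₀ C δ h0 hC hδ) (aux_half (L - x₀) C δ h1' hC hδ))
  rw [← mul_add, ← Real.log_mul (by positivity) (by positivity)]
  apply mul_le_mul_of_nonneg_left _ (by positivity)
  apply Real.log_le_log (by positivity)
  have e1 : C ^ 2 * L / (2 * δ ^ 2) ≤ C ^ 2 * L / δ ^ 2 := by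
    apply div_le_div_of_nonneg_left (by positivity) (by positivity)
    nlinarith [sq_nonneg δ]
  have e2 : C ^ 2 * L / δ ^ 2 = C ^ 2 * x₀ / δ ^ 2 + C ^ 2 * (L - x₀) / δ ^ 2 := by ring
  have e3 : 0 ≤ C ^ 2 * x₀ / δ ^ 2 * (C ^ 2 * (L - x₀) / δ ^ 2) := by positivity
  nlinarith
end

section
/- Let L, C, ε, K > 0 and let v : [0, L] → (0, ∞) be continuous, attaining its minimum value δ := min_{[0,L]} v at a point x₀ ∈ [0, L], and suppose v(x) ≤ δ + C|x − x₀|^{1/2} for all x ∈ [0, L]. If ε ∫₀^L v(x)^{−2} dx ≤ K, then δ ≥ C √(L/2) · exp(−C²K/ε). -/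
lemma aux_int (d C s : ℝ) (hd : 0 < d) (hC : 0 < C) (hs : 0 ≤ s) :
    ∫ t in (0:ℝ)..s, (2 * (d ^ 2 + C ^ 2 * t))⁻¹ =
      (Real.log (d ^ 2 + C ^ 2 * s) - Real.log (d ^ 2)) / (2 * C ^ 2) := by
  have hp : ∀ t ∈ Set.uIcc 0 s, 0 < d ^ 2 + C ^ 2 * t := by
    intro t ht
    rw [Set.uIcc_of_le hs] at ht
    have := ht.1
    positivity
  have h := intervalIntegral.integral_eq_sub_of_hasDerivAt
    (a := 0) (b := s) (f := fun t => Real.log (d ^ 2 + C ^ 2 * t) / (2 * C ^ 2))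
    (f' := fun t => (2 * (d ^ 2 + C ^ 2 * t))⁻¹) ?_ ?_
  · rw [h]; simp only [mul_zero, add_zero]; ring
  · intro t ht
    have h1 : HasDerivAt (fun t => d ^ 2 + C ^ 2 * t) (C ^ 2) t := by
      simpa using ((hasDerivAt_id t).const_mul (C ^ 2)).const_add (d ^ 2)
    have h2 := (h1.log (hp t ht).ne').div_const (2 * C ^ 2)
    have hne := (hp t ht).ne'
    have hC' := hC.ne'
    have e : C ^ 2 / (d ^ 2 + C ^ 2 * t) / (2 * C ^ 2) = (2 * (d ^ 2 + C ^ 2 * t))⁻¹ := by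
      clear h2 h1
      generalize d ^ 2 + C ^ 2 * t = q at *
      field_simp
    rw [e] at h2
    exact h2
  · apply ContinuousOn.intervalIntegrable
    apply ContinuousOn.inv₀ (by fun_prop)
    intro t ht
    have := hp t ht
    positivity

lemma aux_pt (d C r w : ℝ) (hw : 0 < w) (hr : 0 ≤ r)
    (h : w ≤ d + C * Real.sqrt r) : (2 * (d ^ 2 + C ^ 2 * r))⁻¹ ≤ (w ^ 2)⁻¹ := by
  apply inv_anti₀ (by positivity)
  have h1 : w ^ 2 ≤ (d + C * Real.sqrt r) ^ 2 := pow_le_pow_left₀ hw.le h 2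
  have h2 := Real.sq_sqrt hr
  have h3 : C ^ 2 * r = (C * Real.sqrt r) ^ 2 := by rw [mul_pow, h2]
  rw [h3]
  nlinarith [sq_nonneg (d - C * Real.sqrt r)]

/-- Positivity lower bound of Section 6: if `v : [0,L] → (0,∞)` is continuous, attains
its minimum `δ = v x₀`, satisfies `v x ≤ δ + C|x−x₀|^{1/2}` on `[0,L]`, and
`ε ∫₀ᴸ v⁻² ≤ K`, then `δ ≥ C √(L/2) exp(−C²K/ε)`. -/
theorem stmt_9 (L C ε K : ℝ) (hL : 0 < L) (hC : 0 < C) (hε : 0 < ε) (hK : 0 < K)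
    (v : ℝ → ℝ) (hv : ContinuousOn v (Set.Icc 0 L))
    (hpos : ∀ x ∈ Set.Icc (0 : ℝ) L, 0 < v x)
    (x₀ : ℝ) (hx₀ : x₀ ∈ Set.Icc (0 : ℝ) L)
    (hmin : ∀ x ∈ Set.Icc (0 : ℝ) L, v x₀ ≤ v x)
    (hHolder : ∀ x ∈ Set.Icc (0 : ℝ) L, v x ≤ v x₀ + C * Real.sqrt |x - x₀|)
    (hint : ε * ∫ x in (0:ℝ)..L, ((v x) ^ 2)⁻¹ ≤ K) :
    C * Real.sqrt (L / 2) * Real.exp (-(C ^ 2 * K / ε)) ≤ v x₀ := by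
  obtain ⟨h0, h1⟩ := hx₀
  have hd : 0 < v x₀ := hpos x₀ ⟨h0, h1⟩
  have hcont : ContinuousOn (fun x => ((v x) ^ 2)⁻¹) (Set.Icc 0 L) := by
    apply ContinuousOn.inv₀ (hv.pow 2)
    intro x hx
    exact (pow_pos (hpos x hx) 2).ne'
  have i1 : IntervalIntegrable (fun x => ((v x) ^ 2)⁻¹) MeasureTheory.volume 0 x₀ := by
    apply ContinuousOn.intervalIntegrable
    rw [Set.uIcc_of_le h0]
    exact hcont.mono (Set.Icc_subset_Icc le_rfl h1)
  have i2 : IntervalIntegrable (fun x => ((v x) ^ 2)⁻¹) MeasureTheory.volume x₀ L := by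
    apply ContinuousOn.intervalIntegrable
    rw [Set.uIcc_of_le h1]
    exact hcont.mono (Set.Icc_subset_Icc h0 le_rfl)
  generalize hδ : v x₀ = d at *
  have b1 : ∫ t in (0:ℝ)..x₀, (2 * (d ^ 2 + C ^ 2 * t))⁻¹ ≤ ∫ x in (0:ℝ)..x₀, ((v x) ^ 2)⁻¹ := by
    have e := intervalIntegral.integral_comp_sub_left (a := 0) (b := x₀)
      (fun t => (2 * (d ^ 2 + C ^ 2 * t))⁻¹) x₀
    rw [sub_self, sub_zero] at e
    rw [← e]
    apply intervalIntegral.integral_mono_on h0 _ i1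
    · intro x hx
      have hx' : x ∈ Set.Icc 0 L := ⟨hx.1, hx.2.trans h1⟩
      apply aux_pt _ _ _ _ (hpos x hx') (sub_nonneg.2 hx.2)
      have := hHolder x hx'
      rwa [abs_sub_comm, abs_of_nonneg (sub_nonneg.2 hx.2)] at this
    · apply ContinuousOn.intervalIntegrable
      apply ContinuousOn.inv₀ (by fun_prop)
      intro t ht
      rw [Set.uIcc_of_le h0] at ht
      have := sub_nonneg.2 ht.2
      positivity
  have b2 : ∫ t in (0:ℝ)..(L - x₀), (2 * (d ^ 2 + C ^ 2 * t))⁻¹ ≤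
      ∫ x in x₀..L, ((v x) ^ 2)⁻¹ := by
    have e := intervalIntegral.integral_comp_sub_right (a := x₀) (b := L)
      (fun t => (2 * (d ^ 2 + C ^ 2 * t))⁻¹) x₀
    rw [sub_self] at e
    rw [← e]
    apply intervalIntegral.integral_mono_on h1 _ i2
    · intro x hx
      have hx' : x ∈ Set.Icc 0 L := ⟨h0.trans hx.1, hx.2⟩
      apply aux_pt _ _ _ _ (hpos x hx') (sub_nonneg.2 hx.1)
      have := hHolder x hx'
      rwa [abs_of_nonneg (sub_nonneg.2 hx.1)] at this
    · apply ContinuousOn.intervalIntegrable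
      apply ContinuousOn.inv₀ (by fun_prop)
      intro t ht
      rw [Set.uIcc_of_le h1] at ht
      have := sub_nonneg.2 ht.1
      positivity
  rw [aux_int d C _ hd hC h0] at b1
  rw [aux_int d C _ hd hC (sub_nonneg.2 h1)] at b2
  rw [← intervalIntegral.integral_add_adjacent_intervals i1 i2, mul_comm, ← le_div_iff₀ hε] at hint
  have hy := sub_nonneg.2 h1
  have key : (Real.log (d ^ 2 + C ^ 2 * x₀) - Real.log (d ^ 2)) +
      (Real.log (d ^ 2 + C ^ 2 * (L - x₀)) - Real.log (d ^ 2)) ≤ 2 * (C ^ 2 * K / ε) := by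
    have h := (add_le_add b1 b2).trans hint
    rw [← add_div, div_le_iff₀ (by positivity)] at h
    refine h.trans (le_of_eq ?_)
    ring
  have hp1 : 0 < d ^ 2 + C ^ 2 * x₀ := by positivity
  have hp2 : 0 < d ^ 2 + C ^ 2 * (L - x₀) := by positivity
  have l1 : Real.log (d ^ 2 * (C ^ 2 * L)) ≤
      Real.log (d ^ 2 + C ^ 2 * x₀) + Real.log (d ^ 2 + C ^ 2 * (L - x₀)) := by
    rw [← Real.log_mul hp1.ne' hp2.ne']
    apply Real.log_le_log (by positivity)
    have : 0 ≤ (C ^ 2 * x₀) * (C ^ 2 * (L - x₀)) := by positivity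
    nlinarith [sq_nonneg (d ^ 2)]
  rw [Real.log_mul (by positivity) (by positivity)] at l1
  have l2 : Real.log (C ^ 2 * L) + -(2 * (C ^ 2 * K / ε)) ≤ Real.log (d ^ 2) := by linarith
  have l3 := Real.exp_le_exp.2 l2
  rw [Real.exp_add, Real.exp_log (by positivity), Real.exp_log (by positivity)] at l3
  refine (sq_le_sq₀ (by positivity) hd.le).1 ?_
  rw [mul_pow, mul_pow, Real.sq_sqrt (by positivity), ← Real.exp_nat_mul]
  refine le_trans ?_ l3
  have e : ((2:ℕ):ℝ) * -(C ^ 2 * K / ε) = -(2 * (C ^ 2 * K / ε)) := by push_cast; ring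
  rw [e]
  gcongr
  linarith
end

section
/- Let ε > 0, L > 0, T > 0, and let v : [0, T] × ℝ → ℝ be smooth (continuously differentiable in t and four times continuously differentiable in x, with continuous mixed derivatives), L-periodic in x, and satisfy the regularized deterministic thin-film equation ∂ₜv = −∂ₓ( f_ε(v) ∂ₓ³ v ) on [0, T] × ℝ. Then for every t ∈ [0, T], ∫₀^L (∂ₓ v(t, x))² dx + 2 ∫₀^t ∫₀^L f_ε(v(s,x)) (∂ₓ³ v(s,x))² dx ds = ∫₀^L (∂ₓ v(0, x))² dx. -/
theorem cdx (g : ℝ → ℝ → ℝ) (hg : ContDiff ℝ (⊤ : ℕ∞) (Function.uncurry g)) (t x : ℝ) :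
    HasDerivAt (g t) (fderiv ℝ (Function.uncurry g) (t, x) (0, 1)) x := by
  have h1 : HasFDerivAt (Function.uncurry g) (fderiv ℝ (Function.uncurry g) (t, x)) (t, x) :=
    (hg.differentiable (by simp) (t, x)).hasFDerivAt
  have h2 : HasDerivAt (fun y : ℝ => (t, y)) ((0 : ℝ), (1 : ℝ)) x :=
    (hasDerivAt_const x t).prodMk (hasDerivAt_id x)
  exact h1.comp_hasDerivAt x h2

theorem cdt (g : ℝ → ℝ → ℝ) (hg : ContDiff ℝ (⊤ : ℕ∞) (Function.uncurry g)) (t x : ℝ) :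
    HasDerivAt (fun τ => g τ x) (fderiv ℝ (Function.uncurry g) (t, x) (1, 0)) t := by
  have h1 : HasFDerivAt (Function.uncurry g) (fderiv ℝ (Function.uncurry g) (t, x)) (t, x) :=
    (hg.differentiable (by simp) (t, x)).hasFDerivAt
  have h2 : HasDerivAt (fun y : ℝ => (y, x)) ((1 : ℝ), (0 : ℝ)) t :=
    (hasDerivAt_id t).prodMk (hasDerivAt_const t x)
  exact h1.comp_hasDerivAt t h2

theorem smooth_fd (g : ℝ → ℝ → ℝ) (hg : ContDiff ℝ (⊤ : ℕ∞) (Function.uncurry g)) (w : ℝ × ℝ) :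
    ContDiff ℝ (⊤ : ℕ∞) (fun p => fderiv ℝ (Function.uncurry g) p w) :=
  (hg.fderiv_right (m := (⊤ : ℕ∞)) (by simp)).clm_apply contDiff_const

theorem smooth_dx (g : ℝ → ℝ → ℝ) (hg : ContDiff ℝ (⊤ : ℕ∞) (Function.uncurry g)) :
    ContDiff ℝ (⊤ : ℕ∞) (Function.uncurry (fun t => deriv (g t))) := by
  have : Function.uncurry (fun t => deriv (g t)) =
      fun p => fderiv ℝ (Function.uncurry g) p (0, 1) := by
    ext ⟨t, x⟩
    exact (cdx g hg t x).deriv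
  rw [this]
  exact smooth_fd g hg _

theorem smooth_dt (g : ℝ → ℝ → ℝ) (hg : ContDiff ℝ (⊤ : ℕ∞) (Function.uncurry g)) :
    ContDiff ℝ (⊤ : ℕ∞) (Function.uncurry (fun t x => deriv (fun τ => g τ x) t)) := by
  have : Function.uncurry (fun t x => deriv (fun τ => g τ x) t) =
      fun p => fderiv ℝ (Function.uncurry g) p (1, 0) := by
    ext ⟨t, x⟩
    exact (cdt g hg t x).deriv
  rw [this]
  exact smooth_fd g hg _

theorem deriv_slice_t (D : ℝ × ℝ → (ℝ × ℝ →L[ℝ] ℝ)) (hD : ContDiff ℝ (⊤ : ℕ∞) D)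
    (t x : ℝ) (w : ℝ × ℝ) :
    deriv (fun τ => D (τ, x) w) t = fderiv ℝ D (t, x) (1, 0) w := by
  have h1 : HasFDerivAt D (fderiv ℝ D (t, x)) (t, x) :=
    (hD.differentiable (by simp) (t, x)).hasFDerivAt
  have h2 : HasDerivAt (fun y : ℝ => (y, x)) ((1 : ℝ), (0 : ℝ)) t :=
    (hasDerivAt_id t).prodMk (hasDerivAt_const t x)
  have h3 : HasDerivAt (fun τ => D (τ, x)) (fderiv ℝ D (t, x) (1, 0)) t :=
    h1.comp_hasDerivAt t h2
  have h4 := h3.clm_apply (hasDerivAt_const t w)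
  rw [h4.deriv, map_zero, add_zero]

theorem deriv_slice_x (D : ℝ × ℝ → (ℝ × ℝ →L[ℝ] ℝ)) (hD : ContDiff ℝ (⊤ : ℕ∞) D)
    (t x : ℝ) (w : ℝ × ℝ) :
    deriv (fun y => D (t, y) w) x = fderiv ℝ D (t, x) (0, 1) w := by
  have h1 : HasFDerivAt D (fderiv ℝ D (t, x)) (t, x) :=
    (hD.differentiable (by simp) (t, x)).hasFDerivAt
  have h2 : HasDerivAt (fun y : ℝ => (t, y)) ((0 : ℝ), (1 : ℝ)) x :=
    (hasDerivAt_const x t).prodMk (hasDerivAt_id x)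
  have h3 : HasDerivAt (fun y => D (t, y)) (fderiv ℝ D (t, x) (0, 1)) x :=
    h1.comp_hasDerivAt x h2
  have h4 := h3.clm_apply (hasDerivAt_const x w)
  rw [h4.deriv, map_zero, add_zero]

theorem mixed (g : ℝ → ℝ → ℝ) (hg : ContDiff ℝ (⊤ : ℕ∞) (Function.uncurry g)) (t x : ℝ) :
    deriv (fun τ => deriv (g τ) x) t = deriv (fun y => deriv (fun τ => g τ y) t) x := by
  have e1 : (fun τ => deriv (g τ) x) =
      fun τ => fderiv ℝ (Function.uncurry g) (τ, x) (0, 1) :=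
    funext fun τ => (cdx g hg τ x).deriv
  have e2 : (fun y => deriv (fun τ => g τ y) t) =
      fun y => fderiv ℝ (Function.uncurry g) (t, y) (1, 0) :=
    funext fun y => (cdt g hg t y).deriv
  have hd : ContDiff ℝ (⊤ : ℕ∞) (fderiv ℝ (Function.uncurry g)) :=
    hg.fderiv_right (m := (⊤ : ℕ∞)) (by simp)
  have hs : IsSymmSndFDerivAt ℝ (Function.uncurry g) (t, x) :=
    hg.contDiffAt.isSymmSndFDerivAt (by simp only [minSmoothness_of_isRCLikeNormedField]; exact WithTop.coe_le_coe.2 le_top)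
  have hs' := hs.eq (1, 0) (0, 1)
  rw [e1, e2, deriv_slice_t _ hd, deriv_slice_x _ hd]
  exact hs'

theorem periodic_deriv' (f : ℝ → ℝ) (L : ℝ) (h : Function.Periodic f L) :
    Function.Periodic (deriv f) L := by
  intro x
  rw [← deriv_comp_add_const]
  congr 1
  exact funext h

theorem ibp (L : ℝ) (a b : ℝ → ℝ) (ha : ContDiff ℝ (⊤ : ℕ∞) a) (hb : ContDiff ℝ (⊤ : ℕ∞) b)
    (pa : Function.Periodic a L) (pb : Function.Periodic b L) :
    ∫ x in (0:ℝ)..L, a x * deriv b x = - ∫ x in (0:ℝ)..L, deriv a x * b x := by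
  have := intervalIntegral.integral_mul_deriv_eq_deriv_mul (a := 0) (b := L)
    (u := a) (v := b) (u' := deriv a) (v' := deriv b)
    (fun x _ => (ha.differentiable (by simp) x).hasDerivAt)
    (fun x _ => (hb.differentiable (by simp) x).hasDerivAt)
    ((ha.continuous_deriv (by simp)).intervalIntegrable _ _)
    ((hb.continuous_deriv (by simp)).intervalIntegrable _ _)
  rw [this]
  have h1 : a L = a 0 := by simpa using pa 0
  have h2 : b L = b 0 := by simpa using pb 0
  rw [h1, h2]; ring

/-- Energy identity (Section 3) for the deterministic regularized thin-film dynamics: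
if `v` is smooth, `L`-periodic in `x`, and solves `∂ₜv = −∂ₓ(f_ε(v) ∂ₓ³v)` on
`[0,T] × ℝ` with `f_ε(s) = s⁴/(ε+s²)`, then for every `t ∈ [0,T]`,
`∫₀ᴸ (∂ₓv(t))² + 2∫₀ᵗ∫₀ᴸ f_ε(v)(∂ₓ³v)² = ∫₀ᴸ (∂ₓv(0))²`. -/
theorem stmt_12 (ε L T : ℝ) (hε : 0 < ε) (hL : 0 < L) (hT : 0 < T)
    (v : ℝ → ℝ → ℝ) (hv : ContDiff ℝ (⊤ : ℕ∞) (Function.uncurry v))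
    (hper : ∀ t, Function.Periodic (v t) L)
    (heq : ∀ t ∈ Set.Icc (0 : ℝ) T, ∀ x : ℝ,
      deriv (fun τ => v τ x) t =
        -deriv (fun y => (v t y ^ 4 / (ε + v t y ^ 2)) * deriv^[3] (v t) y) x) :
    ∀ t ∈ Set.Icc (0 : ℝ) T,
      (∫ x in (0:ℝ)..L, (deriv (v t) x) ^ 2) +
        2 * ∫ s in (0:ℝ)..t, ∫ x in (0:ℝ)..L,
          (v s x ^ 4 / (ε + v s x ^ 2)) * (deriv^[3] (v s) x) ^ 2 =
      ∫ x in (0:ℝ)..L, (deriv (v 0) x) ^ 2 := by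
  have hv1 := smooth_dx v hv
  have hv2 := smooth_dx _ hv1
  have hv3 := smooth_dx _ hv2
  have hvt := smooth_dt v hv
  have hv1t := smooth_dt _ hv1
  have slice : ∀ (g : ℝ → ℝ → ℝ), ContDiff ℝ (⊤ : ℕ∞) (Function.uncurry g) →
      ∀ t, ContDiff ℝ (⊤ : ℕ∞) (g t) := fun g hg t =>
    hg.comp (contDiff_const.prodMk contDiff_id)
  have slice' : ∀ (g : ℝ → ℝ → ℝ), ContDiff ℝ (⊤ : ℕ∞) (Function.uncurry g) →
      ∀ x, ContDiff ℝ (⊤ : ℕ∞) (fun t => g t x) := fun g hg x =>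
    hg.comp (contDiff_id.prodMk contDiff_const)
  -- the identity at fixed time
  have key : ∀ s ∈ Set.Icc (0 : ℝ) T,
      ∫ x in (0:ℝ)..L, 2 * (deriv (v s) x * deriv (fun τ => deriv (v τ) x) s) =
      -(2 * ∫ x in (0:ℝ)..L, (v s x ^ 4 / (ε + v s x ^ 2)) * (deriv^[3] (v s) x) ^ 2) := by
    intro s hs
    have p1 := periodic_deriv' _ _ (hper s)
    have p2 := periodic_deriv' _ _ p1
    have p3 := periodic_deriv' _ _ p2
    have pt : Function.Periodic (fun x => deriv (fun τ => v τ x) s) L := by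
      intro x
      have : (fun τ => v τ (x + L)) = fun τ => v τ x := funext fun τ => hper τ x
      simp only [this]
    have sF : ContDiff ℝ (⊤ : ℕ∞)
        (fun y => (v s y ^ 4 / (ε + v s y ^ 2)) * deriv^[3] (v s) y) := by
      refine ContDiff.mul (ContDiff.div ((slice v hv s).pow 4)
        (contDiff_const.add ((slice v hv s).pow 2)) ?_) (slice _ hv3 s)
      intro x
      positivity
    have pF : Function.Periodic
        (fun y => (v s y ^ 4 / (ε + v s y ^ 2)) * deriv^[3] (v s) y) L := by
      intro x
      have h3 : deriv^[3] (v s) (x + L) = deriv^[3] (v s) x := p3 x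
      simp only [hper s x, h3]
    rw [intervalIntegral.integral_const_mul]
    have e1 := ibp L (deriv (v s)) (fun x => deriv (fun τ => v τ x) s) (slice _ hv1 s)
      (slice _ hvt s) p1 pt
    have e2 := ibp L (deriv (deriv (v s))) _ (slice _ hv2 s) sF p2 pF
    simp only [mixed v hv]
    rw [e1]
    simp only [heq s hs, mul_neg, intervalIntegral.integral_neg]
    rw [e2]
    simp only [mul_neg, neg_neg, neg_inj]
    congr 1
    apply intervalIntegral.integral_congr
    intro x _
    simp only [Function.iterate_succ, Function.iterate_zero, Function.comp, id]
    ring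
  intro t ht
  have hI : ∀ x, ∫ s in (0:ℝ)..t, 2 * (deriv (v s) x * deriv (fun τ => deriv (v τ) x) s) =
      (deriv (v t) x) ^ 2 - (deriv (v 0) x) ^ 2 := by
    intro x
    apply intervalIntegral.integral_eq_sub_of_hasDerivAt (f := fun s => (deriv (v s) x) ^ 2)
    · intro s _
      have := (((slice' _ hv1 x).differentiable (by simp) s).hasDerivAt).pow 2
      refine this.congr_deriv ?_
      simp; ring
    · apply Continuous.intervalIntegrable
      exact continuous_const.mul ((slice' _ hv1 x).continuous.mul (slice' _ hv1t x).continuous)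
  have hsw : ∫ x in (0:ℝ)..L, ∫ s in (0:ℝ)..t,
        2 * (deriv (v s) x * deriv (fun τ => deriv (v τ) x) s) =
      ∫ s in (0:ℝ)..t, ∫ x in (0:ℝ)..L,
        2 * (deriv (v s) x * deriv (fun τ => deriv (v τ) x) s) := by
    symm
    simp only [intervalIntegral.integral_of_le hL.le]
    apply MeasureTheory.intervalIntegral_integral_swap
    have hc : Continuous (Function.uncurry fun s x =>
        2 * (deriv (v s) x * deriv (fun τ => deriv (v τ) x) s)) :=
      continuous_const.mul (hv1.continuous.mul hv1t.continuous)
    rw [← Set.uIoc_of_le hL.le, MeasureTheory.Measure.prod_restrict]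
    exact (hc.continuousOn.integrableOn_compact (isCompact_uIcc.prod isCompact_uIcc)).mono_set
      (Set.prod_mono Set.uIoc_subset_uIcc Set.uIoc_subset_uIcc)
  simp only [hI] at hsw
  have hc : ∀ r, IntervalIntegrable (fun x => (deriv (v r) x) ^ 2) MeasureTheory.volume 0 L :=
    fun r => (((slice _ hv1 r).continuous).pow 2).intervalIntegrable _ _
  rw [intervalIntegral.integral_sub (hc t) (hc 0)] at hsw
  have hk : ∫ s in (0:ℝ)..t, ∫ x in (0:ℝ)..L,
        2 * (deriv (v s) x * deriv (fun τ => deriv (v τ) x) s) =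
      -(2 * ∫ s in (0:ℝ)..t, ∫ x in (0:ℝ)..L,
          (v s x ^ 4 / (ε + v s x ^ 2)) * (deriv^[3] (v s) x) ^ 2) := by
    rw [← intervalIntegral.integral_const_mul, ← intervalIntegral.integral_neg]
    apply intervalIntegral.integral_congr
    intro s hs
    rw [Set.uIcc_of_le ht.1] at hs
    exact key s ⟨hs.1, hs.2.trans ht.2⟩
  rw [hk] at hsw
  linarith
end

section
/- Let ε > 0, L > 0, T > 0, p ≥ 2, and let v : [0, T] × ℝ → ℝ be smooth, L-periodic in x, and satisfy ∂ₜv = −∂ₓ( f_ε(v) ∂ₓ³ v ) on [0, T] × ℝ. Then for every t ∈ [0, T], (∫₀^L (∂ₓ v(t,x))² dx)^{p/2} + 2 ∫₀^t (∫₀^L (∂ₓ v(s,x))² dx)^{(p−2)/2} ∫₀^L f_ε(v(s,x)) (∂ₓ³ v(s,x))² dx ds ≤ (∫₀^L (∂ₓ v(0,x))² dx)^{p/2}. -/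
open Set Filter Topology MeasureTheory

lemma aux_hasDerivAt_x {w : ℝ → ℝ → ℝ} (hw : ContDiff ℝ (⊤ : ℕ∞) (Function.uncurry w)) (t x : ℝ) :
    HasDerivAt (w t) (fderiv ℝ (Function.uncurry w) (t, x) (0, 1)) x := by
  have h1 : HasFDerivAt (Function.uncurry w) (fderiv ℝ (Function.uncurry w) (t, x)) (t, x) :=
    (hw.differentiable (by simp)).differentiableAt.hasFDerivAt
  have h2 : HasDerivAt (fun y : ℝ => (t, y)) ((0 : ℝ), (1 : ℝ)) x :=
    (hasDerivAt_const x t).prodMk (hasDerivAt_id x)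
  exact h1.comp_hasDerivAt x h2

lemma aux_hasDerivAt_t {w : ℝ → ℝ → ℝ} (hw : ContDiff ℝ (⊤ : ℕ∞) (Function.uncurry w)) (t x : ℝ) :
    HasDerivAt (fun τ => w τ x) (fderiv ℝ (Function.uncurry w) (t, x) (1, 0)) t := by
  have h1 : HasFDerivAt (Function.uncurry w) (fderiv ℝ (Function.uncurry w) (t, x)) (t, x) :=
    (hw.differentiable (by simp)).differentiableAt.hasFDerivAt
  have h2 : HasDerivAt (fun y : ℝ => (y, x)) ((1 : ℝ), (0 : ℝ)) t :=
    (hasDerivAt_id t).prodMk (hasDerivAt_const t x)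
  exact h1.comp_hasDerivAt t h2

lemma aux_smooth_fderiv {w : ℝ → ℝ → ℝ} (hw : ContDiff ℝ (⊤ : ℕ∞) (Function.uncurry w))
    (e : ℝ × ℝ) : ContDiff ℝ (⊤ : ℕ∞) (fun q => fderiv ℝ (Function.uncurry w) q e) :=
  (hw.fderiv_right (m := (⊤ : ℕ∞)) (by simp)).clm_apply contDiff_const

lemma aux_smooth_x {w : ℝ → ℝ → ℝ} (hw : ContDiff ℝ (⊤ : ℕ∞) (Function.uncurry w)) :
    ContDiff ℝ (⊤ : ℕ∞) (Function.uncurry (fun t x => deriv (w t) x)) := by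
  convert aux_smooth_fderiv hw (0, 1) using 1
  ext ⟨t, x⟩
  exact (aux_hasDerivAt_x hw t x).deriv

lemma aux_smooth_t {w : ℝ → ℝ → ℝ} (hw : ContDiff ℝ (⊤ : ℕ∞) (Function.uncurry w)) :
    ContDiff ℝ (⊤ : ℕ∞) (Function.uncurry (fun t x => deriv (fun τ => w τ x) t)) := by
  convert aux_smooth_fderiv hw (1, 0) using 1
  ext ⟨t, x⟩
  exact (aux_hasDerivAt_t hw t x).deriv

/-- Mixed partial derivatives commute. -/
lemma aux_comm {w : ℝ → ℝ → ℝ} (hw : ContDiff ℝ (⊤ : ℕ∞) (Function.uncurry w)) (t x : ℝ) :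
    deriv (fun τ => deriv (w τ) x) t = deriv (fun y => deriv (fun τ => w τ y) t) x := by
  have hd : ∀ q, HasFDerivAt (fderiv ℝ (Function.uncurry w))
      (fderiv ℝ (fderiv ℝ (Function.uncurry w)) q) q := fun q =>
    ((hw.fderiv_right (m := (⊤ : ℕ∞)) (by simp)).differentiable (by simp)).differentiableAt.hasFDerivAt
  have hs : IsSymmSndFDerivAt ℝ (Function.uncurry w) (t, x) :=
    hw.contDiffAt.isSymmSndFDerivAt (by
      rw [minSmoothness_of_isRCLikeNormedField]
      exact WithTop.coe_le_coe.2 (le_top : (2 : ℕ∞) ≤ ⊤))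
  have e1 : (fun τ => deriv (w τ) x) = fun τ => fderiv ℝ (Function.uncurry w) (τ, x) (0, 1) := by
    ext τ; exact (aux_hasDerivAt_x hw τ x).deriv
  have e2 : (fun y => deriv (fun τ => w τ y) t)
      = fun y => fderiv ℝ (Function.uncurry w) (t, y) (1, 0) := by
    ext y; exact (aux_hasDerivAt_t hw t y).deriv
  have h2 : HasDerivAt (fun y : ℝ => (y, x)) ((1 : ℝ), (0 : ℝ)) t :=
    (hasDerivAt_id t).prodMk (hasDerivAt_const t x)
  have h3 : HasDerivAt (fun y : ℝ => (t, y)) ((0 : ℝ), (1 : ℝ)) x :=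
    (hasDerivAt_const x t).prodMk (hasDerivAt_id x)
  have d1 : HasDerivAt (fun τ => fderiv ℝ (Function.uncurry w) (τ, x) (0, 1))
      (fderiv ℝ (fderiv ℝ (Function.uncurry w)) (t, x) (1, 0) (0, 1)) t :=
    (ContinuousLinearMap.apply ℝ ℝ ((0 : ℝ), (1 : ℝ))).hasFDerivAt.comp_hasDerivAt t
      ((hd (t, x)).comp_hasDerivAt t h2)
  have d2 : HasDerivAt (fun y => fderiv ℝ (Function.uncurry w) (t, y) (1, 0))
      (fderiv ℝ (fderiv ℝ (Function.uncurry w)) (t, x) (0, 1) (1, 0)) x :=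
    (ContinuousLinearMap.apply ℝ ℝ ((1 : ℝ), (0 : ℝ))).hasFDerivAt.comp_hasDerivAt x
      ((hd (t, x)).comp_hasDerivAt x h3)
  rw [e1, e2, d1.deriv, d2.deriv]
  exact hs (1, 0) (0, 1)

/-- Differentiation under the integral sign. -/
lemma aux_deriv_integral {w : ℝ → ℝ → ℝ} (hw : ContDiff ℝ (⊤ : ℕ∞) (Function.uncurry w))
    (L t : ℝ) :
    HasDerivAt (fun t => ∫ x in (0:ℝ)..L, w t x)
      (∫ x in (0:ℝ)..L, deriv (fun τ => w τ x) t) t := by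
  have hc : Continuous (Function.uncurry w) := hw.continuous
  have hc' := (aux_smooth_t hw).continuous
  obtain ⟨C, hC⟩ := ((isCompact_Icc (a := t - 1) (b := t + 1)).prod
    (isCompact_uIcc (a := (0:ℝ)) (b := L))).exists_bound_of_continuousOn hc'.continuousOn
  have hx : ∀ s, Continuous (w s) := fun s => hc.comp (by fun_prop : Continuous fun x => (s, x))
  have hx' : ∀ s, Continuous (fun x => deriv (fun τ => w τ x) s) := fun s =>
    hc'.comp (by fun_prop : Continuous fun x => (s, x))
  refine (intervalIntegral.hasDerivAt_integral_of_dominated_loc_of_deriv_le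
    (F := w) (F' := fun s x => deriv (fun τ => w τ x) s) (s := Icc (t - 1) (t + 1))
    (bound := fun _ => C) (Icc_mem_nhds (by linarith) (by linarith)) ?_ ?_ ?_ ?_ ?_ ?_).2
  · exact Eventually.of_forall fun s => (hx s).aestronglyMeasurable
  · exact (hx t).intervalIntegrable _ _
  · exact (hx' t).aestronglyMeasurable
  · exact Eventually.of_forall fun x hxm s hs => hC (s, x) ⟨hs, uIoc_subset_uIcc hxm⟩
  · exact intervalIntegrable_const
  · refine Eventually.of_forall fun x _ s _ => ?_
    exact (aux_hasDerivAt_t hw s x).differentiableAt.hasDerivAt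

/-- Periodic integration by parts. -/
lemma aux_ibp {g h : ℝ → ℝ} {L : ℝ} (hg : ContDiff ℝ (⊤ : ℕ∞) g) (hh : ContDiff ℝ (⊤ : ℕ∞) h)
    (pg : Function.Periodic g L) (ph : Function.Periodic h L) :
    ∫ x in (0:ℝ)..L, g x * deriv h x = - ∫ x in (0:ℝ)..L, deriv g x * h x := by
  rw [intervalIntegral.integral_mul_deriv_eq_deriv_mul (u' := deriv g) (v' := deriv h)
    (fun x _ => ((hg.differentiable (by simp)) x).hasDerivAt)
    (fun x _ => ((hh.differentiable (by simp)) x).hasDerivAt)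
    ((hg.continuous_deriv (by simp)).intervalIntegrable _ _)
    ((hh.continuous_deriv (by simp)).intervalIntegrable _ _)]
  have h1 : g L = g 0 := by simpa using pg 0
  have h2 : h L = h 0 := by simpa using ph 0
  rw [h1, h2]; ring

lemma aux_periodic_deriv {g : ℝ → ℝ} {L : ℝ} (pg : Function.Periodic g L) :
    Function.Periodic (deriv g) L := by
  intro x
  rw [← deriv_comp_add_const]
  congr 1
  ext y; exact pg y

lemma aux_slice {w : ℝ → ℝ → ℝ} (hw : ContDiff ℝ (⊤ : ℕ∞) (Function.uncurry w)) (t : ℝ) :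
    ContDiff ℝ (⊤ : ℕ∞) (w t) :=
  hw.comp (contDiff_const.prodMk contDiff_id : ContDiff ℝ (⊤ : ℕ∞) fun x : ℝ => (t, x))

/-- Estimate (3.5) of the paper, the `p`-th power energy estimate for the deterministic
dynamics: if `v` is smooth, `L`-periodic in `x`, and solves `∂ₜv = −∂ₓ(f_ε(v) ∂ₓ³v)`
on `[0,T] × ℝ`, then for `p ≥ 2` and every `t ∈ [0,T]`,
`(∫₀ᴸ (∂ₓv(t))²)^{p/2} + 2∫₀ᵗ (∫₀ᴸ (∂ₓv(s))²)^{(p−2)/2} ∫₀ᴸ f_ε(v)(∂ₓ³v)² ds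
  ≤ (∫₀ᴸ (∂ₓv(0))²)^{p/2}`. -/
theorem stmt_13 (ε L T p : ℝ) (hε : 0 < ε) (hL : 0 < L) (hT : 0 < T) (hp : 2 ≤ p)
    (v : ℝ → ℝ → ℝ) (hv : ContDiff ℝ (⊤ : ℕ∞) (Function.uncurry v))
    (hper : ∀ t, Function.Periodic (v t) L)
    (heq : ∀ t ∈ Set.Icc (0 : ℝ) T, ∀ x : ℝ,
      deriv (fun τ => v τ x) t =
        -deriv (fun y => (v t y ^ 4 / (ε + v t y ^ 2)) * deriv^[3] (v t) y) x) :
    ∀ t ∈ Set.Icc (0 : ℝ) T,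
      (∫ x in (0:ℝ)..L, (deriv (v t) x) ^ 2) ^ (p / 2) +
        2 * ∫ s in (0:ℝ)..t,
          (∫ x in (0:ℝ)..L, (deriv (v s) x) ^ 2) ^ ((p - 2) / 2) *
            ∫ x in (0:ℝ)..L,
              (v s x ^ 4 / (ε + v s x ^ 2)) * (deriv^[3] (v s) x) ^ 2 ≤
      (∫ x in (0:ℝ)..L, (deriv (v 0) x) ^ 2) ^ (p / 2) := by
  have hv1 := aux_smooth_x hv
  have hv2 := aux_smooth_x hv1
  have hv3 := aux_smooth_x hv2
  have hvt := aux_smooth_t hv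
  have hF : ContDiff ℝ (⊤ : ℕ∞) (Function.uncurry
      (fun t x => (v t x ^ 4 / (ε + v t x ^ 2)) * deriv^[3] (v t) x)) := by
    refine ContDiff.mul (ContDiff.div (hv.pow 4) (contDiff_const.add (hv.pow 2)) ?_) hv3
    rintro ⟨t, x⟩
    positivity
  have hG : Continuous (Function.uncurry
      (fun t x => (v t x ^ 4 / (ε + v t x ^ 2)) * (deriv^[3] (v t) x) ^ 2)) := by
    refine Continuous.mul (Continuous.div (hv.continuous.pow 4)
      (continuous_const.add (hv.continuous.pow 2)) ?_) (hv3.continuous.pow 2)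
    rintro ⟨t, x⟩
    positivity
  set E : ℝ → ℝ := fun t => ∫ x in (0:ℝ)..L, (deriv (v t) x) ^ 2 with hE
  set D : ℝ → ℝ := fun t => ∫ x in (0:ℝ)..L,
    (v t x ^ 4 / (ε + v t x ^ 2)) * (deriv^[3] (v t) x) ^ 2 with hD
  have hDc : Continuous D :=
    intervalIntegral.continuous_parametric_intervalIntegral_of_continuous' hG 0 L
  have hEc : Continuous E :=
    intervalIntegral.continuous_parametric_intervalIntegral_of_continuous'
      (hv1.continuous.pow 2) 0 L
  have hE0 : ∀ s, 0 ≤ E s := fun s =>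
    intervalIntegral.integral_nonneg hL.le fun x _ => sq_nonneg _
  have hD0 : ∀ s, 0 ≤ D s := fun s =>
    intervalIntegral.integral_nonneg hL.le fun x _ => by positivity
  have key : ∀ s ∈ Icc (0:ℝ) T, HasDerivAt E (-2 * D s) s := by
    intro s hs
    have h := aux_deriv_integral (w := fun t x => (deriv (v t) x) ^ 2) (hv1.pow 2) L s
    convert h using 1
    have e1 : ∀ x, deriv (fun τ => (deriv (v τ) x) ^ 2) s
        = 2 * (deriv (v s) x * deriv (fun y => deriv (fun τ => v τ y) s) x) := by
      intro x
      have := ((aux_hasDerivAt_t hv1 s x).differentiableAt.hasDerivAt.pow 2).deriv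
      refine this.trans ?_
      rw [aux_comm hv s x]
      simp
      ring
    simp_rw [e1]
    rw [intervalIntegral.integral_const_mul,
      aux_ibp (g := deriv (v s)) (h := fun y => deriv (fun τ => v τ y) s)
        (aux_slice hv1 s) (aux_slice hvt s) (aux_periodic_deriv (hper s)) (fun x => by
          simp only [hper _ x])]
    simp_rw [heq s hs]
    have e2 : ∀ x, deriv (deriv (v s)) x *
        -deriv (fun y => (v s y ^ 4 / (ε + v s y ^ 2)) * deriv^[3] (v s) y) x =
        -(deriv (deriv (v s)) x *
        deriv (fun y => (v s y ^ 4 / (ε + v s y ^ 2)) * deriv^[3] (v s) y) x) :=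
      fun x => by ring
    simp_rw [e2]
    rw [intervalIntegral.integral_neg,
      aux_ibp (g := deriv (deriv (v s)))
        (h := fun y => (v s y ^ 4 / (ε + v s y ^ 2)) * deriv^[3] (v s) y)
        (aux_slice hv2 s) (aux_slice hF s)
        (aux_periodic_deriv (aux_periodic_deriv (hper s))) (fun x => by
          have h3 : deriv^[3] (v s) (x + L) = deriv^[3] (v s) x :=
            aux_periodic_deriv (aux_periodic_deriv (aux_periodic_deriv (hper s))) x
          simp only [h3, hper s x])]
    have e3 : ∫ x in (0:ℝ)..L, deriv (deriv (deriv (v s))) x *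
        ((v s x ^ 4 / (ε + v s x ^ 2)) * deriv^[3] (v s) x) = D s := by
      refine intervalIntegral.integral_congr fun x _ => ?_
      change deriv^[3] (v s) x * _ = _
      ring
    rw [e3]; ring
  intro t ht
  have hI : Continuous fun s => E s ^ ((p - 2) / 2) * D s :=
    (hEc.rpow_const fun s => Or.inr (by linarith)).mul hDc
  have hftc := intervalIntegral.integral_eq_sub_of_hasDerivAt (a := 0) (b := t)
    (f := fun s => E s ^ (p / 2)) (f' := fun s => -p * (E s ^ ((p - 2) / 2) * D s))
    (fun s hs => by
      rw [uIcc_of_le ht.1] at hs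
      have := (key s ⟨hs.1, hs.2.trans ht.2⟩).rpow_const (p := p / 2) (Or.inr (by linarith))
      rw [show p / 2 - 1 = (p - 2) / 2 by ring] at this
      have e : -2 * D s * (p / 2) * E s ^ ((p - 2) / 2) = -p * (E s ^ ((p - 2) / 2) * D s) := by
        ring
      rw [e] at this
      exact this)
    ((continuous_const.mul hI).intervalIntegrable _ _)
  rw [intervalIntegral.integral_const_mul] at hftc
  have hnn : 0 ≤ ∫ s in (0:ℝ)..t, E s ^ ((p - 2) / 2) * D s :=
    intervalIntegral.integral_nonneg ht.1 fun s _ =>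
      mul_nonneg (Real.rpow_nonneg (hE0 s) _) (hD0 s)
  change E t ^ (p / 2) + 2 * ∫ s in (0:ℝ)..t, E s ^ ((p - 2) / 2) * D s ≤ E 0 ^ (p / 2)
  have := mul_nonneg (sub_nonneg.2 hp) hnn
  linarith
end

section
/- Let ε > 0, L > 0, T > 0, and let v : [0, T] × ℝ → ℝ be smooth, L-periodic in x, strictly positive everywhere, and satisfy ∂ₜv = −∂ₓ( f_ε(v) ∂ₓ³ v ) on [0, T] × ℝ. Then for every t ∈ [0, T], ∫₀^L G_ε(v(t, x)) dx + ∫₀^t ∫₀^L (∂ₓ² v(s,x))² dx ds = ∫₀^L G_ε(v(0, x)) dx, where G_ε(s) = ε/(6s²) − ln s. -/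
open MeasureTheory in
lemma aux_dx (F : ℝ → ℝ → ℝ) (hF : ContDiff ℝ (⊤ : ℕ∞) (Function.uncurry F)) :
    ContDiff ℝ (⊤ : ℕ∞) (Function.uncurry (fun t x => deriv (F t) x)) := by
  have h1 : ContDiff ℝ (⊤ : ℕ∞) (fun p : ℝ × ℝ => fderiv ℝ (Function.uncurry F) p (0, 1)) :=
    (hF.fderiv_right (m := (⊤ : ℕ∞)) (by exact_mod_cast le_top)).clm_apply contDiff_const
  convert h1 using 1
  funext ⟨t, x⟩
  have hd : HasFDerivAt (Function.uncurry F) (fderiv ℝ (Function.uncurry F) (t, x)) (t, x) :=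
    (hF.differentiable (by simp) (t, x)).hasFDerivAt
  have hl : HasDerivAt (fun y : ℝ => (t, y)) ((0 : ℝ), (1 : ℝ)) x :=
    (hasDerivAt_const x t).prodMk (hasDerivAt_id x)
  exact (hd.comp_hasDerivAt x hl).deriv

lemma aux_dt (F : ℝ → ℝ → ℝ) (hF : ContDiff ℝ (⊤ : ℕ∞) (Function.uncurry F)) :
    ContDiff ℝ (⊤ : ℕ∞) (Function.uncurry (fun t x => deriv (fun τ => F τ x) t)) := by
  have h := aux_dx (fun x t => F t x) (hF.comp (contDiff_snd.prodMk contDiff_fst))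
  exact h.comp (contDiff_snd.prodMk contDiff_fst)

lemma aux_iter (F : ℝ → ℝ → ℝ) (hF : ContDiff ℝ (⊤ : ℕ∞) (Function.uncurry F)) (k : ℕ) :
    ContDiff ℝ (⊤ : ℕ∞) (Function.uncurry (fun t x => deriv^[k] (F t) x)) := by
  induction k with
  | zero => simpa using hF
  | succ k ih =>
    have := aux_dx _ ih
    simpa only [Function.iterate_succ_apply'] using this

lemma aux_per (f : ℝ → ℝ) (L : ℝ) (hf : Function.Periodic f L) (k : ℕ) :
    Function.Periodic (deriv^[k] f) L := by
  induction k with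
  | zero => simpa using hf
  | succ k ih =>
    intro x
    rw [Function.iterate_succ_apply', ← deriv_comp_add_const]
    congr 1
    funext y
    exact ih y

lemma aux_slice_s14 (F : ℝ → ℝ → ℝ) (hF : ContDiff ℝ (⊤ : ℕ∞) (Function.uncurry F)) (t : ℝ) :
    ContDiff ℝ (⊤ : ℕ∞) (F t) :=
  hF.comp (contDiff_const.prodMk contDiff_id)

/-- Spatial identity at a fixed time. -/
lemma aux_space (ε L : ℝ) (hε : 0 < ε) (u w : ℝ → ℝ) (hu : ContDiff ℝ (⊤ : ℕ∞) u)
    (hk : ∀ k, ContDiff ℝ (⊤ : ℕ∞) (deriv^[k] u))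
    (hw : Continuous w)
    (hper : Function.Periodic u L) (hpos : ∀ x, 0 < u x)
    (heq : ∀ x, w x = -deriv (fun y => (u y ^ 4 / (ε + u y ^ 2)) * deriv^[3] u y) x) :
    ∫ x in (0:ℝ)..L, (-ε / (3 * u x ^ 3) - 1 / u x) * w x
      = - ∫ x in (0:ℝ)..L, (deriv^[2] u x) ^ 2 := by
  have hne : ∀ x, u x ≠ 0 := fun x => (hpos x).ne'
  have hne2 : ∀ x, ε + u x ^ 2 ≠ 0 := fun x => by positivity
  have hne3 : ∀ x, 3 * u x ^ 3 ≠ 0 := fun x => by have := hne x; positivity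
  have hdk : ∀ k x, HasDerivAt (deriv^[k] u) (deriv^[k+1] u x) x := by
    intro k x
    rw [Function.iterate_succ_apply']
    exact ((hk k).differentiable (by simp) x).hasDerivAt
  have hd0 : ∀ x, HasDerivAt u (deriv^[1] u x) x := fun x => hdk 0 x
  have hP : ∀ x, HasDerivAt (fun y => (u y ^ 4 / (ε + u y ^ 2)) * deriv^[3] u y) (- w x) x := by
    intro x
    rw [heq x, neg_neg]
    apply DifferentiableAt.hasDerivAt
    have h0 := (hd0 x).differentiableAt
    have h3 := (hdk 3 x).differentiableAt
    have := hne2 x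
    exact ((h0.pow 4).div ((differentiableAt_const ε).add (h0.pow 2)) this).mul h3
  have hq : ∀ x, HasDerivAt (fun y => -ε / (3 * u y ^ 3) - 1 / u y)
      ((ε + u x ^ 2) / u x ^ 4 * deriv^[1] u x) x := by
    intro x
    have h := ((hasDerivAt_const x (-ε)).div (((hd0 x).pow 3).const_mul 3) (hne3 x)).sub
      ((hasDerivAt_const x (1:ℝ)).div (hd0 x) (hne x))
    refine h.congr_deriv ?_
    have := hne x
    simp
    field_simp
    ring
  have hK : ∀ x, HasDerivAt (fun y => deriv^[1] u y * deriv^[2] u y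
        - (-ε / (3 * u y ^ 3) - 1 / u y) * ((u y ^ 4 / (ε + u y ^ 2)) * deriv^[3] u y))
      ((-ε / (3 * u x ^ 3) - 1 / u x) * w x + (deriv^[2] u x) ^ 2) x := by
    intro x
    refine (((hdk 1 x).mul (hdk 2 x)).sub ((hq x).mul (hP x))).congr_deriv ?_
    have h1 := hne x
    have h2 := hne2 x
    have e : (ε + u x ^ 2) / u x ^ 4 * deriv^[1] u x * (u x ^ 4 / (ε + u x ^ 2) * deriv^[3] u x)
      = deriv^[1] u x * deriv^[3] u x := by field_simp
    rw [e]
    ring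
  have hc2 : Continuous (fun x => (deriv^[2] u x) ^ 2) := (hk 2).continuous.pow 2
  have hc1 : Continuous (fun x => (-ε / (3 * u x ^ 3) - 1 / u x) * w x) := by
    have hq' : Continuous (fun y => -ε / (3 * u y ^ 3) - 1 / u y) :=
      continuous_iff_continuousAt.2 fun x => (hq x).continuousAt
    exact hq'.mul hw
  have hI := intervalIntegral.integral_eq_sub_of_hasDerivAt (a := 0) (b := L)
    (fun x _ => hK x) ((hc1.add hc2).intervalIntegrable 0 L)
  rw [intervalIntegral.integral_add (hc1.intervalIntegrable 0 L) (hc2.intervalIntegrable 0 L)] at hI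
  have p0 : u L = u 0 := by simpa using hper 0
  have pk : ∀ k, deriv^[k] u L = deriv^[k] u 0 := fun k => by simpa using aux_per u L hper k 0
  rw [p0, pk 1, pk 2, pk 3] at hI
  linarith

/-- Entropy dissipation identity (3.22): if `v` is smooth, `L`-periodic in `x`,
strictly positive, and solves `∂ₜv = −∂ₓ(f_ε(v) ∂ₓ³v)` on `[0,T] × ℝ`, then with
`G_ε(s) = ε/(6s²) − ln s`, for every `t ∈ [0,T]`,
`∫₀ᴸ G_ε(v(t)) + ∫₀ᵗ∫₀ᴸ (∂ₓ²v)² = ∫₀ᴸ G_ε(v(0))`. -/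
theorem stmt_14 (ε L T : ℝ) (hε : 0 < ε) (hL : 0 < L) (hT : 0 < T)
    (v : ℝ → ℝ → ℝ) (hv : ContDiff ℝ (⊤ : ℕ∞) (Function.uncurry v))
    (hper : ∀ t, Function.Periodic (v t) L)
    (hpos : ∀ t x, 0 < v t x)
    (heq : ∀ t ∈ Set.Icc (0 : ℝ) T, ∀ x : ℝ,
      deriv (fun τ => v τ x) t =
        -deriv (fun y => (v t y ^ 4 / (ε + v t y ^ 2)) * deriv^[3] (v t) y) x) :
    ∀ t ∈ Set.Icc (0 : ℝ) T,
      (∫ x in (0:ℝ)..L, (ε / (6 * v t x ^ 2) - Real.log (v t x))) +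
        ∫ s in (0:ℝ)..t, ∫ x in (0:ℝ)..L, (deriv^[2] (v s) x) ^ 2 =
      ∫ x in (0:ℝ)..L, (ε / (6 * v 0 x ^ 2) - Real.log (v 0 x)) := by
  intro t ht
  have hne : ∀ t x, v t x ≠ 0 := fun t x => (hpos t x).ne'
  have hvt := aux_dt v hv
  have hcv : Continuous (fun p : ℝ × ℝ => v p.1 p.2) := hv.continuous
  have hcw : Continuous (fun p : ℝ × ℝ => deriv (fun τ => v τ p.2) p.1) := hvt.continuous
  have hc : Continuous (fun p : ℝ × ℝ =>
      (-ε / (3 * v p.1 p.2 ^ 3) - 1 / v p.1 p.2) * deriv (fun τ => v τ p.2) p.1) := by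
    refine Continuous.mul (Continuous.sub ?_ ?_) hcw
    · refine continuous_const.div (continuous_const.mul (hcv.pow 3)) fun p => ?_
      have := hpos p.1 p.2
      positivity
    · exact continuous_const.div hcv fun p => hne _ _
  have hcg : ∀ s, Continuous (fun x => ε / (6 * v s x ^ 2) - Real.log (v s x)) := by
    intro s
    have hs := (aux_slice_s14 v hv s).continuous
    refine Continuous.sub ?_ (hs.log fun x => hne s x)
    refine continuous_const.div (continuous_const.mul (hs.pow 2)) fun x => ?_
    have := hpos s x
    positivity
  have hgd : ∀ x s, HasDerivAt (fun τ => ε / (6 * v τ x ^ 2) - Real.log (v τ x))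
      ((-ε / (3 * v s x ^ 3) - 1 / v s x) * deriv (fun τ => v τ x) s) s := by
    intro x s
    have hd : HasDerivAt (fun τ => v τ x) (deriv (fun τ => v τ x) s) s := by
      have : ContDiff ℝ (⊤ : ℕ∞) (fun τ => v τ x) := hv.comp (contDiff_id.prodMk contDiff_const)
      exact (this.differentiable (by simp) s).hasDerivAt
    have h6 : 6 * v s x ^ 2 ≠ 0 := by have := hpos s x; positivity
    have h := ((hasDerivAt_const s ε).div ((hd.pow 2).const_mul 6) h6).sub (hd.log (hne s x))
    refine h.congr_deriv ?_
    have := hne s x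
    simp
    field_simp
    ring
  have hft : ∀ x, (ε / (6 * v t x ^ 2) - Real.log (v t x)) - (ε / (6 * v 0 x ^ 2) - Real.log (v 0 x))
      = ∫ s in (0:ℝ)..t, (-ε / (3 * v s x ^ 3) - 1 / v s x) * deriv (fun τ => v τ x) s := by
    intro x
    symm
    refine intervalIntegral.integral_eq_sub_of_hasDerivAt (fun s _ => hgd x s) ?_
    exact Continuous.intervalIntegrable (hc.comp (continuous_id.prodMk continuous_const)) 0 t
  have hswap : ∫ x in (0:ℝ)..L, ∫ s in (0:ℝ)..t,
        (-ε / (3 * v s x ^ 3) - 1 / v s x) * deriv (fun τ => v τ x) s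
      = ∫ s in (0:ℝ)..t, ∫ x in (0:ℝ)..L,
        (-ε / (3 * v s x ^ 3) - 1 / v s x) * deriv (fun τ => v τ x) s := by
    simp only [intervalIntegral.integral_of_le hL.le, intervalIntegral.integral_of_le ht.1]
    apply MeasureTheory.integral_integral_swap
    rw [MeasureTheory.Measure.prod_restrict]
    have hc' : Continuous (Function.uncurry fun x s : ℝ =>
        (-ε / (3 * v s x ^ 3) - 1 / v s x) * deriv (fun τ => v τ x) s) :=
      hc.comp continuous_swap
    have hcomp : IsCompact (Set.Icc (0:ℝ) L ×ˢ Set.Icc (0:ℝ) t) := isCompact_Icc.prod isCompact_Icc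
    exact (hc'.continuousOn.integrableOn_compact hcomp).mono_set
      (Set.prod_mono Set.Ioc_subset_Icc_self Set.Ioc_subset_Icc_self)
  have hsp : ∫ s in (0:ℝ)..t, ∫ x in (0:ℝ)..L,
        (-ε / (3 * v s x ^ 3) - 1 / v s x) * deriv (fun τ => v τ x) s
      = ∫ s in (0:ℝ)..t, - ∫ x in (0:ℝ)..L, (deriv^[2] (v s) x) ^ 2 := by
    apply intervalIntegral.integral_congr
    intro s hs
    rw [Set.uIcc_of_le ht.1] at hs
    exact aux_space ε L hε (v s) (fun x => deriv (fun τ => v τ x) s) (aux_slice_s14 v hv s)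
      (fun k => aux_slice_s14 _ (aux_iter v hv k) s)
      (hcw.comp (continuous_const.prodMk continuous_id)) (hper s) (hpos s)
      (heq s ⟨hs.1, hs.2.trans ht.2⟩)
  have hsub := intervalIntegral.integral_sub ((hcg t).intervalIntegrable 0 L)
    ((hcg 0).intervalIntegrable (μ := MeasureTheory.volume) 0 L)
  rw [intervalIntegral.integral_congr (fun x _ => hft x), hswap, hsp,
    intervalIntegral.integral_neg] at hsub
  linarith
end
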